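/- Let H and K be real Hilbert spaces, L : H → K a continuous linear map, ε > 0 and δ > 0. Let H₀ be a closed linear subspace of H, let U* ∈ H satisfy L U* = 0, and let ℰ ∈ H satisfy ‖ℰ‖_H ≤ δ. Suppose U^δ belongs to the affine set U* + ℰ + H₀ and minimizes J_ε(V) = ‖L V‖_K² + ε ‖V‖_H² over U* + ℰ + H₀. Then, with Φ = U^δ − U* − ℰ ∈ H₀, one has ‖L Φ‖_K² + ε ‖Φ‖_H² ≤ (‖L‖² + 2ε) δ² + 2ε ‖U*‖_H². (Abstract form of the key a priori estimate (4.4) in the proof of the paper's convergence theorem for the quasi-reversibility method.) -/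

import Mathlib

theorem stmt_12
    {H K : Type*} [NormedAddCommGroup H] [InnerProductSpace ℝ H] [CompleteSpace H]
    [NormedAddCommGroup K] [InnerProductSpace ℝ K] [CompleteSpace K]
    (L : H →L[ℝ] K) (ε δ : ℝ) (hε : 0 < ε) (hδ : 0 < δ)
    (H₀ : Submodule ℝ H) (hH₀ : IsClosed (H₀ : Set H))
    (Ustar : H) (hUstar : L Ustar = 0)
    (E : H) (hE : ‖E‖ ≤ δ)
    (Uδ : H) (hUδ : Uδ - (Ustar + E) ∈ H₀)
    (hmin : ∀ V : H, V - (Ustar + E) ∈ H₀ →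
      ‖L Uδ‖ ^ 2 + ε * ‖Uδ‖ ^ 2 ≤ ‖L V‖ ^ 2 + ε * ‖V‖ ^ 2) :
    ‖L (Uδ - Ustar - E)‖ ^ 2 + ε * ‖Uδ - Ustar - E‖ ^ 2
      ≤ (‖L‖ ^ 2 + 2 * ε) * δ ^ 2 + 2 * ε * ‖Ustar‖ ^ 2 := by
  obtain ⟨P, hP⟩ : ∃ P, P = Uδ - Ustar - E := ⟨_, rfl⟩
  have hPm : P ∈ H₀ := by rw [hP, sub_sub]; exact hUδ
  rw [← hP]
  have expK : ∀ s : ℝ, ‖L (Uδ - s • P)‖ ^ 2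
      = ‖L Uδ‖ ^ 2 - 2 * s * inner ℝ (L Uδ) (L P) + s ^ 2 * ‖L P‖ ^ 2 := by
    intro s
    rw [map_sub, map_smul, norm_sub_sq_real, real_inner_smul_right, norm_smul, mul_pow,
      Real.norm_eq_abs, sq_abs]
    ring
  have expH : ∀ s : ℝ, ‖Uδ - s • P‖ ^ 2
      = ‖Uδ‖ ^ 2 - 2 * s * inner ℝ Uδ P + s ^ 2 * ‖P‖ ^ 2 := by
    intro s
    rw [norm_sub_sq_real, real_inner_smul_right, norm_smul, mul_pow,
      Real.norm_eq_abs, sq_abs]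
    ring
  obtain ⟨a, ha⟩ : ∃ a, a = ‖L P‖ ^ 2 + ε * ‖P‖ ^ 2 := ⟨_, rfl⟩
  obtain ⟨b, hb⟩ : ∃ b, b = inner ℝ (L Uδ) (L P) + ε * inner ℝ Uδ P := ⟨_, rfl⟩
  have ha0 : 0 ≤ a := by rw [ha]; positivity
  have key : ∀ s : ℝ, 0 ≤ -2 * s * b + s ^ 2 * a := by
    intro s
    have h := hmin (Uδ - s • P) (by
      rw [sub_right_comm]
      exact H₀.sub_mem hUδ (H₀.smul_mem s hPm))
    rw [expK, expH] at h
    rw [ha, hb]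
    linarith
  have hb0 : b ≤ 0 := by
    by_contra hc
    push Not at hc
    have h := key (b / (a + 1))
    have e : -2 * (b / (a + 1)) * b + (b / (a + 1)) ^ 2 * a
        = -(b ^ 2 * (a + 2)) / (a + 1) ^ 2 := by
      field_simp
      ring
    rw [e] at h
    have : 0 < b ^ 2 * (a + 2) / (a + 1) ^ 2 := by positivity
    rw [neg_div] at h
    linarith
  have hW : Uδ - (1 : ℝ) • P = Ustar + E := by rw [hP, one_smul]; abel
  have hK1 := expK 1
  have hH1 := expH 1
  rw [hW] at hK1 hH1
  rw [map_add, hUstar, zero_add] at hK1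
  have hLE : ‖L E‖ ≤ ‖L‖ * δ := L.le_opNorm_of_le hE
  have hLE2 : ‖L E‖ ^ 2 ≤ ‖L‖ ^ 2 * δ ^ 2 := by
    rw [← mul_pow]; gcongr
  have hE2 : ‖E‖ ^ 2 ≤ δ ^ 2 := by gcongr
  have hpar := parallelogram_law_with_norm ℝ Ustar E
  have hsum : ‖Ustar + E‖ ^ 2 ≤ 2 * δ ^ 2 + 2 * ‖Ustar‖ ^ 2 := by
    nlinarith [mul_self_nonneg ‖Ustar - E‖]
  have hsum' := mul_le_mul_of_nonneg_left hsum hε.le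
  rw [hH1] at hsum'
  have hJ : 0 ≤ ‖L Uδ‖ ^ 2 + ε * ‖Uδ‖ ^ 2 := by positivity
  linarith
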